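/- For fixed integer r ≥ 1, the Dirichlet series with shifted coefficient A_{σ_r}(s) = Σ_{n≥1} σ_r(n+1)/n^s converges for Re(s) > r + 1 and equals ζ(r+1)·Σ_{i=0}^{r} C(r,i)·(D₁(s-i, r) + D₂(s-i, r)), where D₁(s,r) = Σ_{m≥1} (μ(m)/(φ(m)m^{r+1}))·Σ_{n≥1} c_m(n)/n^s and D₂(s,r) = Σ_{m≥1} (1/(φ(m)m^{r+1}))·Σ_{χ mod m, χ≠χ₀} τ(χ)·Σ_{n≥1} c'_{χ̄}(n)/n^s. -/

import Mathlib

open scoped Classical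
open ArithmeticFunction

noncomputable def eC (x : ℂ) : ℂ := Complex.exp (2 * Real.pi * Complex.I * x)

/-- Ramanujan sum `c_m(n) = ∑_{b mod m, (b,m)=1} e(bn/m)`. -/
noncomputable def ramanujanSum (m n : ℕ) : ℂ :=
  ∑ b ∈ (Finset.range m).filter (fun b => Nat.Coprime b m), eC ((b : ℂ) * n / m)

/-- Gauss sum `τ(χ) = ∑_{b mod m} χ(b) e(b/m)`. -/
noncomputable def gaussSum' {m : ℕ} (χ : DirichletCharacter ℂ m) : ℂ :=
  ∑ b ∈ Finset.range m, χ b * eC ((b : ℂ) / m)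

/-- `c'_g(n) = ∑_{b mod m, (b,m)=1} g(b) e(bn/m)` for a weight `g`. -/
noncomputable def cCharF (m : ℕ) (g : ℕ → ℂ) (n : ℕ) : ℂ :=
  ∑ b ∈ (Finset.range m).filter (fun b => Nat.Coprime b m), g b * eC ((b : ℂ) * n / m)

/-- `D₁(s,r) = Σ_{m≥1} (μ(m)/(φ(m) m^{r+1})) Σ_{n≥1} c_m(n)/n^s`. -/
noncomputable def D1 (r : ℕ) (s : ℂ) : ℂ :=
  ∑' m : ℕ, ((moebius (m + 1) : ℤ) / ((Nat.totient (m + 1) : ℂ) * ((m + 1 : ℕ) : ℂ) ^ (r + 1))) *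
    ∑' n : ℕ, ramanujanSum (m + 1) (n + 1) / ((n + 1 : ℕ) : ℂ) ^ s

/-- `D₂(s,r) = Σ_{m≥1} (1/(φ(m) m^{r+1})) Σ_{χ≠χ₀ mod m} τ(χ) Σ_{n≥1} c'_{χ̄}(n)/n^s`. -/
noncomputable def D2 (r : ℕ) (s : ℂ) : ℂ :=
  ∑' m : ℕ, (1 / ((Nat.totient (m + 1) : ℂ) * ((m + 1 : ℕ) : ℂ) ^ (r + 1))) *
    ∑ χ ∈ Finset.univ.filter (fun χ : DirichletCharacter ℂ (m + 1) => χ ≠ 1),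
      gaussSum' χ *
        ∑' n : ℕ, cCharF (m + 1) (fun b => starRingEnd ℂ (χ b)) (n + 1) / ((n + 1 : ℕ) : ℂ) ^ s

/-!
Möbius inversion of `∑_{d ∣ m} c_d(n) = m · [m ∣ n]` gives Ramanujan's identity
`ζ(r+1) n^r ∑_m c_m(n) / m^{r+1} = σ_r(n)`. Evaluate it at `n + 1` and expand `(n + 1)^r` by the
binomial theorem: the factor `n^i` shifts `s` to `s - i`, so what is left is the Dirichlet series
of `n ↦ ∑_m c_m(n + 1) / m^{r+1}`. Expanding the additive character `b ↦ e(b/m)` in Dirichlet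
characters gives `φ(m) c_m(n + 1) = ∑_χ τ(χ) c'_χ̄(n)`, whose trivial character contributes
`μ(m) c_m(n)`, that is `D₁`, and whose other characters contribute `D₂`. The order of the two
summations may be exchanged because `|c_m(n)| ≤ σ_1(gcd(m, n))` makes the double series absolutely
convergent; the trivial bound `|c_m(n)| ≤ φ(m)` would not suffice for `r = 1`.
-/

open Finset LSeries
open scoped ComplexConjugate LSeries.notation

section RamanujanSum

lemma eC_add (x y : ℂ) : eC (x + y) = eC x * eC y := by
  rw [eC, mul_add, Complex.exp_add, eC, eC]

lemma eC_natCast_mul (n : ℕ) (x : ℂ) : eC (n * x) = eC x ^ n := by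
  rw [eC, mul_left_comm, Complex.exp_nat_mul, eC]

lemma norm_eC_ofReal (x : ℝ) : ‖eC x‖ = 1 := by
  rw [eC, mul_right_comm]
  exact_mod_cast Complex.norm_exp_ofReal_mul_I (2 * Real.pi * x)

lemma sum_nthRootsFinset_pow {R : Type*} [CommRing R] [IsDomain R] {ζ : R} {m : ℕ}
    (hζ : IsPrimitiveRoot ζ m) (n : ℕ) :
    ∑ x ∈ Polynomial.nthRootsFinset m (1 : R), x ^ n = if m ∣ n then (m : R) else 0 := by
  rcases Nat.eq_zero_or_pos m with rfl | hm
  · simp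
  split_ifs with h
  · have hpow {x : R} (hx : x ∈ Polynomial.nthRootsFinset m (1 : R)) : x ^ n = 1 := by
      obtain ⟨k, rfl⟩ := h
      rw [pow_mul, (Polynomial.mem_nthRootsFinset hm 1).mp hx, one_pow]
    rw [sum_congr rfl fun x hx ↦ hpow hx, sum_const, hζ.card_nthRootsFinset, nsmul_one]
  · have hrange : ∑ x ∈ Polynomial.nthRootsFinset m (1 : R), x ^ n =
        ∑ i ∈ range m, (ζ ^ n) ^ i := by
      refine (sum_bij (fun i _ ↦ ζ ^ i) (fun i _ ↦ ?_) (fun i hi j hj ↦ ?_) (fun x hx ↦ ?_)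
        fun i _ ↦ pow_right_comm ζ n i).symm
      · rw [Polynomial.mem_nthRootsFinset hm, pow_right_comm, hζ.pow_eq_one, one_pow]
      · exact hζ.pow_inj (mem_range.mp hi) (mem_range.mp hj)
      · have : NeZero m := ⟨hm.ne'⟩
        obtain ⟨i, hi, rfl⟩ := hζ.eq_pow_of_pow_eq_one ((Polynomial.mem_nthRootsFinset hm 1).mp hx)
        exact ⟨i, mem_range.mpr hi, rfl⟩
    have hgeom := mul_geom_sum (ζ ^ n) m
    rw [pow_right_comm, hζ.pow_eq_one, one_pow, sub_self] at hgeom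
    rw [hrange]
    exact (mul_eq_zero.mp hgeom).resolve_left <| sub_ne_zero.mpr <|
      mt (hζ.pow_eq_one_iff_dvd n).mp h

lemma ramanujanSum_eq_sum_primitiveRoots (m n : ℕ) :
    ramanujanSum m n = ∑ ζ ∈ primitiveRoots m ℂ, ζ ^ n := by
  rcases eq_or_ne m 0 with rfl | hm
  · simp [ramanujanSum]
  have hζ := Complex.isPrimitiveRoot_exp m hm
  have heC (b : ℕ) : eC (b / m) = Complex.exp (2 * Real.pi * Complex.I / m) ^ b := by
    rw [div_eq_mul_one_div, eC_natCast_mul, eC, mul_one_div]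
  refine sum_bij (fun b _ ↦ eC (b / m)) (fun b hb ↦ ?_) (fun b hb c hc h ↦ ?_) (fun ζ h ↦ ?_)
    fun b _ ↦ ?_
  · rw [mem_primitiveRoots hm.pos, heC]
    exact hζ.pow_of_coprime b (mem_filter.mp hb).2
  · simp only [heC] at h
    exact hζ.pow_inj (mem_range.mp (mem_filter.mp hb).1) (mem_range.mp (mem_filter.mp hc).1) h
  · obtain ⟨b, hb, hbm, h⟩ :=
      (Complex.isPrimitiveRoot_iff ζ m hm).mp ((mem_primitiveRoots hm.pos).mp h)
    exact ⟨b, mem_filter.mpr ⟨mem_range.mpr hb, hbm⟩, h⟩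
  · rw [← eC_natCast_mul, mul_comm (b : ℂ), mul_div_assoc]

lemma sum_divisors_ramanujanSum (m n : ℕ) :
    ∑ d ∈ m.divisors, ramanujanSum d n = if m ∣ n then (m : ℂ) else 0 := by
  rcases eq_or_ne m 0 with rfl | hm
  · simp
  rw [← sum_nthRootsFinset_pow (Complex.isPrimitiveRoot_exp m hm),
    IsPrimitiveRoot.nthRoots_one_eq_biUnion_primitiveRoots, sum_biUnion]
  · simp only [ramanujanSum_eq_sum_primitiveRoots]
  · exact fun d _ e _ h ↦ IsPrimitiveRoot.disjoint h

lemma ramanujanSum_eq_convolution (m n : ℕ) :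
    ramanujanSum m n = (↗moebius ⍟ fun d ↦ if d ∣ n then (d : ℂ) else 0) m := by
  rcases Nat.eq_zero_or_pos m with rfl | hm
  · simp [ramanujanSum]
  · rw [convolution_def]
    exact (sum_eq_iff_sum_mul_moebius_eq.mp (fun k _ ↦ sum_divisors_ramanujanSum k n) m hm).symm

lemma ramanujanSum_eq_sum_divisors_gcd (m n : ℕ) :
    ramanujanSum m n = ∑ d ∈ (m.gcd n).divisors, ((moebius (m / d) : ℤ) : ℂ) * d := by
  rcases eq_or_ne m 0 with rfl | hm
  · simp [ramanujanSum]
  have hdiv : (m.gcd n).divisors = {d ∈ m.divisors | d ∣ n} := by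
    ext d
    simp [Nat.dvd_gcd_iff, hm]
  rw [ramanujanSum_eq_convolution, convolution_def, hdiv, sum_filter]
  beta_reduce
  rw [Nat.sum_divisorsAntidiagonal'
      (f := fun e d ↦ ((moebius e : ℤ) : ℂ) * if d ∣ n then (d : ℂ) else 0)]
  simp only [mul_ite, mul_zero]

lemma ramanujanSum_one_right (m : ℕ) : ramanujanSum m 1 = (moebius m : ℤ) := by
  simp [ramanujanSum_eq_sum_divisors_gcd]

lemma norm_ramanujanSum_le_sigma_gcd (m n : ℕ) : ‖ramanujanSum m n‖ ≤ sigma 1 (m.gcd n) := by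
  rw [ramanujanSum_eq_sum_divisors_gcd, sigma_one_apply, Nat.cast_sum]
  refine norm_sum_le_of_le _ fun d _ ↦ ?_
  have hμ : |((moebius (m / d) : ℤ) : ℝ)| ≤ 1 := mod_cast abs_moebius_le_one
  rw [norm_mul, Complex.norm_natCast, Complex.norm_intCast]
  exact mul_le_of_le_one_left d.cast_nonneg hμ

end RamanujanSum

section Characters

lemma sum_sum_mul_conj_dirichletCharacter {m b : ℕ} (hb : b < m) (hbm : b.Coprime m) (f : ℕ → ℂ) :
    ∑ χ : DirichletCharacter ℂ m, (∑ y ∈ range m, χ y * f y) * conj (χ b) = m.totient * f b := by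
  have : NeZero m := ⟨by omega⟩
  have hunit : IsUnit (b : ZMod m) := (ZMod.isUnit_iff_coprime b m).mpr hbm
  have hconj (χ : DirichletCharacter ℂ m) : conj (χ b) = χ (b : ZMod m)⁻¹ := by
    obtain ⟨u, hu⟩ := hunit
    rw [← hu, ZMod.inv_coe_unit, ← Ring.inverse_unit, ← MulChar.inv_apply]
    exact MulChar.star_apply' χ _
  have horth {y : ℕ} (hy : y < m) :
      ∑ χ : DirichletCharacter ℂ m, χ (b : ZMod m)⁻¹ * χ y =
        if b = y then (m.totient : ℂ) else 0 := by
    rw [DirichletCharacter.sum_char_inv_mul_char_eq ℂ hunit]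
    simp only [ZMod.natCast_eq_natCast_iff', Nat.mod_eq_of_lt hb, Nat.mod_eq_of_lt hy]
  calc ∑ χ : DirichletCharacter ℂ m, (∑ y ∈ range m, χ y * f y) * conj (χ b)
      = ∑ y ∈ range m, (∑ χ : DirichletCharacter ℂ m, χ (b : ZMod m)⁻¹ * χ y) * f y := by
        simp only [hconj, sum_mul]
        rw [sum_comm]
        exact sum_congr rfl fun y _ ↦ sum_congr rfl fun χ _ ↦ by ring
    _ = ∑ y ∈ range m, if b = y then m.totient * f y else 0 :=
        sum_congr rfl fun y hy ↦ by rw [horth (mem_range.mp hy), ite_mul, zero_mul]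
    _ = m.totient * f b := by rw [sum_ite_eq, if_pos (mem_range.mpr hb)]

lemma totient_mul_ramanujanSum_succ (m n : ℕ) :
    m.totient * ramanujanSum m (n + 1) =
      ∑ χ : DirichletCharacter ℂ m, gaussSum' χ * cCharF m (fun b ↦ conj (χ b)) n := by
  have hexp {b : ℕ} (hb : b ∈ {b ∈ range m | b.Coprime m}) :
      m.totient * eC (b * (n + 1 : ℕ) / m) =
        (∑ χ : DirichletCharacter ℂ m, gaussSum' χ * conj (χ b)) * eC (b * n / m) := by
    obtain ⟨hb, hbm⟩ := mem_filter.mp hb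
    unfold gaussSum'
    rw [sum_sum_mul_conj_dirichletCharacter (mem_range.mp hb) hbm fun y ↦ eC (y / m), mul_assoc,
      ← eC_add]
    push_cast
    ring_nf
  simp only [ramanujanSum, cCharF, mul_sum]
  rw [sum_congr rfl fun b hb ↦ hexp hb, sum_comm]
  simp only [sum_mul, mul_assoc]

lemma gaussSum'_one (m : ℕ) :
    gaussSum' (1 : DirichletCharacter ℂ m) = (moebius m : ℤ) := by
  rw [← ramanujanSum_one_right, gaussSum', ramanujanSum, sum_filter]
  refine sum_congr rfl fun b _ ↦ ?_
  split_ifs with hb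
  · rw [MulChar.one_apply ((ZMod.isUnit_iff_coprime b m).mpr hb), one_mul, Nat.cast_one, mul_one]
  · rw [MulChar.map_nonunit _ (mt (ZMod.isUnit_iff_coprime b m).mp hb), zero_mul]

lemma cCharF_conj_one (m n : ℕ) :
    cCharF m (fun b ↦ conj ((1 : DirichletCharacter ℂ m) b)) n = ramanujanSum m n := by
  refine sum_congr rfl fun b hb ↦ ?_
  beta_reduce
  rw [MulChar.one_apply ((ZMod.isUnit_iff_coprime b m).mpr (mem_filter.mp hb).2), map_one, one_mul]

lemma norm_cCharF_le {m : ℕ} {g : ℕ → ℂ} (hg : ∀ b, ‖g b‖ ≤ 1) (n : ℕ) :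
    ‖cCharF m g n‖ ≤ m.totient := by
  calc ‖cCharF m g n‖ ≤ ∑ b ∈ range m with b.Coprime m, (1 : ℝ) := by
        refine norm_sum_le_of_le _ fun b _ ↦ ?_
        have hphase : ‖eC (b * n / m)‖ = 1 := by simpa using norm_eC_ofReal (b * n / m)
        rw [norm_mul, hphase, mul_one]
        exact hg b
    _ = m.totient := by
        simp only [Nat.totient_eq_card_coprime, Nat.coprime_comm, sum_const, nsmul_one]

lemma norm_ramanujanSum_le_totient (m n : ℕ) : ‖ramanujanSum m n‖ ≤ m.totient := by
  simpa only [ramanujanSum, cCharF, one_mul] using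
    norm_cCharF_le (g := fun _ ↦ 1) (fun _ ↦ norm_one.le) n

end Characters

section LSeries

lemma LSeriesSummable_iff_summable_succ (f : ℕ → ℂ) (s : ℂ) :
    LSeriesSummable f s ↔ Summable fun n : ℕ ↦ f (n + 1) / ((n + 1 : ℕ) : ℂ) ^ s := by
  rw [LSeriesSummable, ← summable_nat_add_iff 1]
  simp only [term_of_ne_zero (Nat.succ_ne_zero _)]

lemma LSeries_eq_tsum_succ (f : ℕ → ℂ) (s : ℂ) :
    LSeries f s = ∑' n : ℕ, f (n + 1) / ((n + 1 : ℕ) : ℂ) ^ s := by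
  rw [LSeries, ← Nat.succ_injective.tsum_eq (f := term f s)]
  · exact tsum_congr fun n ↦ term_of_ne_zero n.succ_ne_zero f s
  · exact fun n hn ↦ ⟨n.pred, Nat.succ_pred (ne_of_apply_ne (term f s) (by simpa using hn))⟩

lemma LSeriesHasSum_natCast_pow_mul {f : ℕ → ℂ} {s a : ℂ} {i : ℕ}
    (h : LSeriesHasSum f (s - i) a) : LSeriesHasSum (fun n ↦ (n : ℂ) ^ i * f n) s a := by
  refine HasSum.congr_fun h fun n ↦ ?_
  rcases eq_or_ne n 0 with rfl | hn
  · simp only [term_zero]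
  have hn' : (n : ℂ) ≠ 0 := Nat.cast_ne_zero.mpr hn
  rw [term_of_ne_zero hn, term_of_ne_zero hn, Complex.cpow_sub _ _ hn', Complex.cpow_natCast,
    div_div_eq_mul_div, mul_comm]

lemma norm_LSeries_le {f : ℕ → ℂ} {C : ℝ} (hf : ∀ n ≠ 0, ‖f n‖ ≤ C) {s : ℂ} (hs : 1 < s.re) :
    ‖LSeries f s‖ ≤ C * ∑' n : ℕ, 1 / (n : ℝ) ^ s.re := by
  rw [← tsum_mul_left]
  refine tsum_of_norm_bounded
    ((Real.summable_one_div_nat_rpow.mpr hs).mul_left C).hasSum fun n ↦ ?_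
  rw [mul_one_div]
  rcases eq_or_ne n 0 with rfl | hn
  · simp [Real.zero_rpow (by positivity : s.re ≠ 0)]
  · rw [norm_term_eq, if_neg hn]
    gcongr
    exact hf n hn

lemma tsum_term_term (A : ℕ → ℕ → ℂ) (s z : ℂ) (m : ℕ) :
    ∑' n, term (fun k ↦ term (A k) s n) z m = term (fun k ↦ LSeries (A k) s) z m := by
  rcases eq_or_ne m 0 with rfl | hm
  · simp only [term_zero, tsum_zero]
  · simp only [term_of_ne_zero hm, tsum_div_const, LSeries]

lemma term_term_comm (A : ℕ → ℕ → ℂ) (s z : ℂ) (m n : ℕ) :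
    term (fun k ↦ term (A k) s n) z m = term (fun l ↦ term (A · l) z m) s n := by
  simp only [term_def]
  split_ifs <;> simp only [zero_div, div_right_comm]

lemma LSeriesSummable_LSeries {A : ℕ → ℕ → ℂ} {s z : ℂ}
    (h : Summable fun p : ℕ × ℕ ↦ term (fun m ↦ term (A m) s p.2) z p.1) :
    LSeriesSummable (fun m ↦ LSeries (A m) s) z :=
  h.prod.congr fun m ↦ tsum_term_term A s z m

lemma LSeriesHasSum_LSeries_comm {A : ℕ → ℕ → ℂ} {s z : ℂ}
    (h : Summable fun p : ℕ × ℕ ↦ term (fun m ↦ term (A m) s p.2) z p.1) :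
    LSeriesHasSum (fun n ↦ LSeries (A · n) z) s (LSeries (fun m ↦ LSeries (A m) s) z) := by
  have hsum : LSeriesSummable (fun n ↦ LSeries (A · n) z) s :=
    LSeriesSummable_LSeries <| h.prod_symm.congr fun p ↦ term_term_comm A s z p.2 p.1
  have hcomm : LSeries (fun m ↦ LSeries (A m) s) z = LSeries (fun n ↦ LSeries (A · n) z) s :=
    calc LSeries (fun m ↦ LSeries (A m) s) z
        = ∑' m, ∑' n, term (fun k ↦ term (A k) s n) z m :=
          tsum_congr fun m ↦ (tsum_term_term A s z m).symm
      _ = ∑' n, ∑' m, term (fun k ↦ term (A k) s n) z m :=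
          (Summable.tsum_comm (f := fun m n ↦ term (fun k ↦ term (A k) s n) z m) h).symm
      _ = ∑' n, ∑' m, term (fun l ↦ term (A · l) z m) s n :=
          tsum_congr fun n ↦ tsum_congr fun m ↦ term_term_comm A s z m n
      _ = LSeries (fun n ↦ LSeries (A · n) z) s :=
          tsum_congr fun n ↦ tsum_term_term (fun l k ↦ A k l) z s n
  rw [hcomm]
  exact hsum.LSeriesHasSum

end LSeries

section Summability

lemma summable_gcd_rpow_div {a b : ℝ} (ha : 1 < a) (hb : 1 < b) :
    Summable fun p : ℕ × ℕ ↦ (p.1.gcd p.2 : ℝ) ^ a / ((p.1 : ℝ) ^ a * (p.2 : ℝ) ^ b) := by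
  -- Writing `p = (g k, g l)` with `g` the gcd, the summand is `g⁻ᵇ k⁻ᵃ l⁻ᵇ`.
  have hA := Real.summable_one_div_nat_rpow.mpr ha
  have hB := Real.summable_one_div_nat_rpow.mpr hb
  have hinj : Function.Injective fun p : ℕ × ℕ ↦
      (p.1.gcd p.2, p.1 / p.1.gcd p.2, p.2 / p.1.gcd p.2) := by
    refine Function.LeftInverse.injective (g := fun q ↦ (q.1 * q.2.1, q.1 * q.2.2)) fun p ↦ ?_
    simp only [Nat.mul_div_cancel' (Nat.gcd_dvd_left _ _),
      Nat.mul_div_cancel' (Nat.gcd_dvd_right _ _)]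
  have hnonneg {c : ℝ} : 0 ≤ fun n : ℕ ↦ 1 / (n : ℝ) ^ c := fun n ↦ by positivity
  refine ((hB.mul_of_nonneg (hA.mul_of_nonneg hB hnonneg hnonneg) hnonneg fun p ↦
    mul_nonneg (hnonneg p.1) (hnonneg p.2)).comp_injective hinj).congr fun p ↦ ?_
  dsimp only [Function.comp_apply]
  rcases eq_or_ne (p.1.gcd p.2) 0 with h | h
  · simp [h, Real.zero_rpow, (zero_lt_one.trans ha).ne', (zero_lt_one.trans hb).ne']
  have hg : (p.1.gcd p.2 : ℝ) ≠ 0 := Nat.cast_ne_zero.mpr h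
  rw [Nat.cast_div (Nat.gcd_dvd_left _ _) hg, Nat.cast_div (Nat.gcd_dvd_right _ _) hg,
    Real.div_rpow (by positivity) (by positivity), Real.div_rpow (by positivity) (by positivity)]
  field_simp

lemma norm_term_comp_succ_le (f : ℕ → ℂ) {s : ℂ} (hs : 0 ≤ s.re) (n : ℕ) :
    ‖term (fun k ↦ f (k + 1)) s n‖ ≤ 2 ^ s.re * ‖term f s (n + 1)‖ := by
  rcases eq_or_ne n 0 with rfl | hn
  · simp only [term_zero, norm_zero]
    positivity
  rw [norm_term_eq, if_neg hn, norm_term_eq, if_neg n.succ_ne_zero, mul_div_assoc']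
  have hn' : (0 : ℝ) < n := by positivity
  rw [div_le_div_iff₀ (by positivity) (by positivity), mul_comm (2 ^ _), mul_assoc,
    ← Real.mul_rpow zero_le_two hn'.le]
  gcongr
  exact_mod_cast (by omega : n + 1 ≤ 2 * n)

lemma norm_term_term_ramanujanSum_le {s z : ℂ} (hz : 2 ≤ z.re) (m n : ℕ) :
    ‖term (fun k ↦ term (ramanujanSum k) s n) z m‖ ≤
      (m.gcd n : ℝ) ^ z.re / ((m : ℝ) ^ z.re * (n : ℝ) ^ s.re) := by
  rcases eq_or_ne m 0 with rfl | hm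
  · rw [term_zero, norm_zero]
    positivity
  rw [norm_term_eq, if_neg hm, norm_term_eq]
  split_ifs with hn
  · rw [zero_div]
    positivity
  have hgcd : 1 ≤ m.gcd n := Nat.gcd_pos_of_pos_left n hm.pos
  have hbound : ‖ramanujanSum m n‖ ≤ (m.gcd n : ℝ) ^ z.re :=
    calc ‖ramanujanSum m n‖ ≤ sigma 1 (m.gcd n) := norm_ramanujanSum_le_sigma_gcd m n
      _ ≤ (m.gcd n : ℝ) ^ (2 : ℝ) := mod_cast sigma_le_pow_succ 1 (m.gcd n)
      _ ≤ (m.gcd n : ℝ) ^ z.re := Real.rpow_le_rpow_of_exponent_le (mod_cast hgcd) hz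
  rw [div_div, mul_comm ((n : ℝ) ^ _)]
  gcongr

lemma summable_term_term_ramanujanSum_succ {s z : ℂ} (hs : 1 < s.re) (hz : 2 ≤ z.re) :
    Summable fun p : ℕ × ℕ ↦
      term (fun m ↦ term (fun n ↦ ramanujanSum m (n + 1)) s p.2) z p.1 := by
  have hinj : Function.Injective (Prod.map id Nat.succ : ℕ × ℕ → ℕ × ℕ) :=
    Function.injective_id.prodMap Nat.succ_injective
  refine .of_norm_bounded (((summable_gcd_rpow_div (one_lt_two.trans_le hz) hs).comp_injective
    hinj).mul_left (2 ^ s.re)) fun (m, n) ↦ ?_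
  calc ‖term (fun k ↦ term (fun l ↦ ramanujanSum k (l + 1)) s n) z m‖
      = ‖term (fun l ↦ term (ramanujanSum · (l + 1)) z m) s n‖ := by rw [term_term_comm]
    _ ≤ 2 ^ s.re * ‖term (fun l ↦ term (ramanujanSum · l) z m) s (n + 1)‖ :=
        norm_term_comp_succ_le (fun l ↦ term (ramanujanSum · l) z m) (by positivity) n
    _ ≤ _ := by
        rw [← term_term_comm ramanujanSum]
        gcongr
        exact norm_term_term_ramanujanSum_le hz m (n + 1)

end Summability

section RamanujanIdentity

lemma riemannZeta_mul_LSeries_ramanujanSum {n : ℕ} (hn : n ≠ 0) {z : ℂ} (hz : 1 < z.re) :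
    riemannZeta z * LSeries (ramanujanSum · n) z = ∑ d ∈ n.divisors, (d : ℂ) ^ (1 - z) := by
  have hdiv : LSeriesHasSum (fun d ↦ if d ∣ n then (d : ℂ) else 0) z
      (∑ d ∈ n.divisors, (d : ℂ) ^ (1 - z)) := by
    have hterm {d : ℕ} (hd : d ∈ n.divisors) :
        term (fun d ↦ if d ∣ n then (d : ℂ) else 0) z d = (d : ℂ) ^ (1 - z) := by
      have hd0 : d ≠ 0 := (Nat.pos_of_mem_divisors hd).ne'
      rw [term_of_ne_zero hd0, if_pos (Nat.dvd_of_mem_divisors hd),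
        Complex.cpow_sub _ _ (Nat.cast_ne_zero.mpr hd0), Complex.cpow_one]
    rw [← sum_congr rfl fun d hd ↦ hterm hd]
    refine hasSum_sum_of_ne_finset_zero fun d hd ↦ ?_
    have hdn : ¬ d ∣ n := fun h ↦ hd (Nat.mem_divisors.mpr ⟨h, hn⟩)
    simp only [term_def, if_neg hdn, zero_div, ite_self]
  have hμ := (LSeriesSummable_moebius_iff.mpr hz).LSeriesHasSum
  rw [funext (ramanujanSum_eq_convolution · n), (hμ.convolution hdiv).LSeries_eq, ← mul_assoc,
    ← LSeries_zeta_eq_riemannZeta hz, LSeries_zeta_mul_Lseries_moebius hz, one_mul]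

lemma riemannZeta_mul_natCast_pow_mul_LSeries_ramanujanSum {r : ℕ} (hr : 1 ≤ r) {n : ℕ}
    (hn : n ≠ 0) :
    riemannZeta (r + 1) * ((n : ℂ) ^ r * LSeries (ramanujanSum · n) (r + 1)) = sigma r n := by
  have hz : 1 < ((r : ℂ) + 1).re := by
    rw [Complex.add_re, Complex.natCast_re, Complex.one_re]
    exact_mod_cast Nat.lt_add_of_pos_left hr
  rw [mul_left_comm, riemannZeta_mul_LSeries_ramanujanSum hn hz, sigma_apply,
    ← Nat.sum_div_divisors n (· ^ r), mul_sum, Nat.cast_sum]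
  refine sum_congr rfl fun d hd ↦ ?_
  have hd0 : (d : ℂ) ≠ 0 := Nat.cast_ne_zero.mpr (Nat.pos_of_mem_divisors hd).ne'
  rw [sub_add_cancel_right, Complex.cpow_neg, Complex.cpow_natCast, Nat.cast_pow,
    Nat.cast_div (Nat.dvd_of_mem_divisors hd) hd0, div_pow, div_eq_mul_inv]

end RamanujanIdentity

section DirichletSeries

lemma LSeriesSummable_cCharF_conj {m : ℕ} (χ : DirichletCharacter ℂ m) {s : ℂ} (hs : 1 < s.re) :
    LSeriesSummable (cCharF m fun b ↦ conj (χ b)) s := by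
  refine LSeriesSummable_of_bounded_of_one_lt_re (fun n _ ↦ norm_cCharF_le (fun b ↦ ?_) n) hs
  rw [RCLike.norm_conj]
  exact χ.norm_le_one b

lemma LSeries_ramanujanSum_succ {m : ℕ} (hm : m ≠ 0) {s : ℂ} (hs : 1 < s.re) :
    LSeries (fun n ↦ ramanujanSum m (n + 1)) s =
      (moebius m : ℤ) / m.totient * LSeries (ramanujanSum m) s +
        1 / m.totient * ∑ χ : DirichletCharacter ℂ m with χ ≠ 1,
          gaussSum' χ * LSeries (cCharF m fun b ↦ conj (χ b)) s := by
  have hφ : (m.totient : ℂ) ≠ 0 := Nat.cast_ne_zero.mpr (Nat.totient_pos.mpr hm.pos).ne'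
  have hexp : (m.totient : ℂ) • (fun n ↦ ramanujanSum m (n + 1)) =
      ∑ χ : DirichletCharacter ℂ m, gaussSum' χ • cCharF m (fun b ↦ conj (χ b)) := by
    ext n
    simpa only [Finset.sum_apply, Pi.smul_apply, smul_eq_mul] using
      totient_mul_ramanujanSum_succ m n
  have hL := congrArg (LSeries · s) hexp
  simp only [LSeries_smul] at hL
  rw [LSeries_sum fun χ _ ↦ (LSeriesSummable_cCharF_conj χ hs).smul _] at hL
  simp only [LSeries_smul] at hL
  rw [filter_ne', ← mul_right_inj' hφ, hL, ← add_sum_erase _ _ (mem_univ 1), gaussSum'_one,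
    funext (cCharF_conj_one m)]
  field_simp

lemma LSeriesSummable_moebius_div_totient_mul_LSeries_ramanujanSum {s z : ℂ} (hs : 1 < s.re)
    (hz : 1 < z.re) :
    LSeriesSummable (fun m ↦ (moebius m : ℤ) / m.totient * LSeries (ramanujanSum m) s) z := by
  refine LSeriesSummable_of_bounded_of_one_lt_re (m := ∑' n : ℕ, 1 / (n : ℝ) ^ s.re)
    (fun m hm ↦ ?_) hz
  have hφ : (0 : ℝ) < m.totient := Nat.cast_pos.mpr (Nat.totient_pos.mpr hm.pos)
  have hμ : |((moebius m : ℤ) : ℝ)| ≤ 1 := mod_cast abs_moebius_le_one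
  rw [norm_mul, norm_div, Complex.norm_intCast, Complex.norm_natCast]
  calc |((moebius m : ℤ) : ℝ)| / m.totient * ‖LSeries (ramanujanSum m) s‖
      ≤ 1 / m.totient * (m.totient * ∑' n : ℕ, 1 / (n : ℝ) ^ s.re) := by
        gcongr
        exact norm_LSeries_le (fun n _ ↦ norm_ramanujanSum_le_totient m n) hs
    _ = ∑' n : ℕ, 1 / (n : ℝ) ^ s.re := by rw [one_div, inv_mul_cancel_left₀ hφ.ne']

lemma D1_eq_LSeries (r : ℕ) (s : ℂ) :
    D1 r s = LSeries (fun m ↦ (moebius m : ℤ) / m.totient * LSeries (ramanujanSum m) s)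
      (r + 1) := by
  rw [LSeries_eq_tsum_succ, D1]
  refine tsum_congr fun m ↦ ?_
  rw [LSeries_eq_tsum_succ, ← Nat.cast_add_one r, Complex.cpow_natCast]
  ring

lemma D2_eq_LSeries (r : ℕ) (s : ℂ) :
    D2 r s = LSeries (fun m ↦ 1 / m.totient * ∑ χ : DirichletCharacter ℂ m with χ ≠ 1,
      gaussSum' χ * LSeries (cCharF m fun b ↦ conj (χ b)) s) (r + 1) := by
  rw [LSeries_eq_tsum_succ, D2]
  refine tsum_congr fun m ↦ ?_
  simp only [LSeries_eq_tsum_succ (cCharF _ _)]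
  rw [← Nat.cast_add_one r, Complex.cpow_natCast, ← div_div, div_mul_eq_mul_div]
  -- The two character sums differ only in their `Fintype` and decidability instances.
  congr!

lemma LSeriesHasSum_LSeries_ramanujanSum_succ {r : ℕ} (hr : 1 ≤ r) {s : ℂ} (hs : 1 < s.re) :
    LSeriesHasSum (fun n ↦ LSeries (ramanujanSum · (n + 1)) (r + 1)) s (D1 r s + D2 r s) := by
  have hz : 2 ≤ ((r : ℂ) + 1).re := by
    rw [Complex.add_re, Complex.natCast_re, Complex.one_re]
    exact_mod_cast Nat.add_le_add_right hr 1
  have hsum := summable_term_term_ramanujanSum_succ hs hz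
  have hD1 :=
    LSeriesSummable_moebius_div_totient_mul_LSeries_ramanujanSum hs (one_lt_two.trans_le hz)
  have hdiff {m : ℕ} (hm : m ≠ 0) := eq_sub_iff_add_eq'.mpr (LSeries_ramanujanSum_succ hm hs).symm
  convert LSeriesHasSum_LSeries_comm hsum using 1
  rw [D1_eq_LSeries, D2_eq_LSeries, LSeries_congr hdiff]
  -- `D₂` converges as a difference of convergent series, so no estimate of it is needed.
  change _ + LSeries (_ - _) _ = _
  rw [LSeries_sub (LSeriesSummable_LSeries hsum) hD1, add_sub_cancel]

lemma LSeriesHasSum_sigma_succ {r : ℕ} (hr : 1 ≤ r) {s : ℂ} (hs : r + 1 < s.re) :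
    LSeriesHasSum (fun n ↦ (sigma r (n + 1) : ℂ)) s (riemannZeta (r + 1) *
      ∑ i ∈ range (r + 1), (r.choose i : ℂ) * (D1 r (s - i) + D2 r (s - i))) := by
  have hre {i : ℕ} (hi : i ∈ range (r + 1)) : 1 < (s - i).re := by
    have hir : (i : ℝ) ≤ r := mod_cast Nat.lt_succ_iff.mp (mem_range.mp hi)
    rw [Complex.sub_re, Complex.natCast_re]
    linarith
  have h := (LSeriesHasSum.sum fun i hi ↦ (LSeriesHasSum_natCast_pow_mul
    (LSeriesHasSum_LSeries_ramanujanSum_succ hr (hre hi))).smul (r.choose i : ℂ)).smul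
      (riemannZeta (r + 1))
  convert h using 1
  ext n
  rw [← riemannZeta_mul_natCast_pow_mul_LSeries_ramanujanSum hr n.succ_ne_zero, Nat.cast_succ,
    add_pow, sum_mul]
  simp only [Pi.smul_apply, Finset.sum_apply, smul_eq_mul, one_pow, mul_one]
  congr! 2 with i
  ring

end DirichletSeries

theorem stmt8 (r : ℕ) (hr : 1 ≤ r) (s : ℂ) (hs : (r : ℝ) + 1 < s.re) :
    Summable (fun n : ℕ => (sigma r (n + 2) : ℂ) / ((n + 1 : ℕ) : ℂ) ^ s) ∧
    (∑' n : ℕ, (sigma r (n + 2) : ℂ) / ((n + 1 : ℕ) : ℂ) ^ s) =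
      riemannZeta ((r : ℂ) + 1) *
        ∑ i ∈ Finset.range (r + 1), (r.choose i : ℂ) * (D1 r (s - i) + D2 r (s - i)) := by
  have h := LSeriesHasSum_sigma_succ hr hs
  exact ⟨(LSeriesSummable_iff_summable_succ (fun n ↦ (sigma r (n + 1) : ℂ)) s).mp h.LSeriesSummable,
    (LSeries_eq_tsum_succ (fun n ↦ (sigma r (n + 1) : ℂ)) s).symm.trans h.LSeries_eq⟩
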